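/- Fix d > 2, n > d+1, m = n−d−1, and let U be a shifted order ideal of monomials of degree at most (d+1)/2 on [m]. Set Û = U ∩ K[x_2,…,x_m] (with Û = {1} if m = 1) and Ũ = {u : x_1 u ∈ U}; let S_d(Û) be the boundary of the complex B_d(Û) generated by {F_d(u) : u ∈ Û}, and let S̃_{d−2}(Ũ) be the boundary of the complex B̃_{d−2}(Ũ) generated by {F_d(x_1 u) ∖ {1,2} : u ∈ Ũ}. Then Shift_{12}(S_d(U)) = S_d(Û) ∪ { {1} ∪ F : F ∈ {2} * S̃_{d−2}(Ũ) }. In particular, S_d(U) satisfies the Link condition with respect to {1,2}, C_{S_d(U)}({1,2}) = S_d(Û), and lk_{S_d(U)}({1,2}) = S̃_{d−2}(Ũ). -/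

import Mathlib

/-! Combinatorics of simplicial complexes on subsets of ℕ (vertex set `[n] = Finset.Icc 1 n`). -/

/-- `Γ` is a simplicial complex on the vertex set `V`. -/
def SimplicialComplexOn (V : Finset ℕ) (Γ : Set (Finset ℕ)) : Prop :=
  (∀ F ∈ Γ, F ⊆ V) ∧ (∀ v ∈ V, ({v} : Finset ℕ) ∈ Γ) ∧
    (∀ F ∈ Γ, ∀ G, G ⊆ F → G ∈ Γ)

/-- The dimension of a simplicial complex, as an integer (`dim Γ = max {|F| - 1 : F ∈ Γ}`). -/
noncomputable def sdim (Γ : Set (Finset ℕ)) : ℤ :=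
  sSup ((fun F : Finset ℕ => (F.card : ℤ) - 1) '' Γ)

/-- A facet of `Γ` is a maximal face. -/
def IsFacet (Γ : Set (Finset ℕ)) (F : Finset ℕ) : Prop :=
  F ∈ Γ ∧ ∀ G ∈ Γ, F ⊆ G → F = G

/-- A complex is pure if all of its facets have the same cardinality. -/
def PureComplex (Γ : Set (Finset ℕ)) : Prop :=
  ∀ F G, IsFacet Γ F → IsFacet Γ G → F.card = G.card

/-- `fvec Γ k` is the number of faces of `Γ` of cardinality `k`, i.e. `f_{k-1}(Γ)`. -/
noncomputable def fvec (Γ : Set (Finset ℕ)) (k : ℕ) : ℕ :=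
  {F ∈ Γ | F.card = k}.ncard

/-- The `h`-vector of a `(d-1)`-dimensional complex:
`h_i = ∑_{j=0}^i (-1)^{i-j} binom(d-j, d-i) f_{j-1}`. -/
noncomputable def hvec (d : ℕ) (Γ : Set (Finset ℕ)) (i : ℕ) : ℤ :=
  ∑ j ∈ Finset.range (i + 1),
    (-1 : ℤ) ^ (i - j) * (Nat.choose (d - j) (d - i) : ℤ) * (fvec Γ j : ℤ)

/-- The link of `Γ` with respect to a face `F`. -/
def linkOf (Γ : Set (Finset ℕ)) (F : Finset ℕ) : Set (Finset ℕ) :=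
  {G | Disjoint G F ∧ G ∪ F ∈ Γ}

/-- The contraction of `Γ` with respect to `{i,j}`, identifying vertex `i` with `j`. -/
def contraction (Γ : Set (Finset ℕ)) (i j : ℕ) : Set (Finset ℕ) :=
  {F | F ∈ Γ ∧ i ∉ F} ∪ {G | ∃ F ∈ Γ, i ∈ F ∧ G = F.erase i ∪ {j}}

/-- The Link condition: `lk_Γ({i}) ∩ lk_Γ({j}) = lk_Γ({i,j})`. -/
def LinkCondition (Γ : Set (Finset ℕ)) (i j : ℕ) : Prop :=
  linkOf Γ {i} ∩ linkOf Γ {j} = linkOf Γ {i, j}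

open Classical in
/-- The shift operator `C_{ij}` on faces. -/
noncomputable def shiftMap (Γ : Set (Finset ℕ)) (i j : ℕ) (F : Finset ℕ) : Finset ℕ :=
  if i ∈ F ∧ j ∉ F ∧ F.erase i ∪ {j} ∉ Γ then F.erase i ∪ {j} else F

/-- `Shift_{ij}(Γ) = {C_{ij}(F) : F ∈ Γ}`. -/
noncomputable def shiftComplex (Γ : Set (Finset ℕ)) (i j : ℕ) : Set (Finset ℕ) :=
  (shiftMap Γ i j) '' Γ

/-- The join `W * Σ = {F ∪ G : F ⊆ W, G ∈ Σ}` of a vertex set with a complex. -/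
def joinW (W : Finset ℕ) (C : Set (Finset ℕ)) : Set (Finset ℕ) :=
  {H | ∃ F ⊆ W, ∃ G ∈ C, H = F ∪ G}

/-- Strong edge decomposability: boundaries of simplices and `{∅}` are strongly edge
decomposable, and recursively, a pure complex satisfying the Link condition w.r.t. an edge
`{i,j}` whose contraction and link are strongly edge decomposable is
strongly edge decomposable. -/
inductive StronglyEdgeDecomposable : Set (Finset ℕ) → Prop
  | trivialComplex : StronglyEdgeDecomposable {(∅ : Finset ℕ)}
  | simplexBoundary (V : Finset ℕ) (hV : V.Nonempty) :
      StronglyEdgeDecomposable {F | F ⊆ V ∧ F ≠ V}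
  | contract (Γ : Set (Finset ℕ)) (i j : ℕ) (hij : i < j)
      (hpure : PureComplex Γ) (hedge : ({i, j} : Finset ℕ) ∈ Γ)
      (hlc : LinkCondition Γ i j)
      (hcon : StronglyEdgeDecomposable (contraction Γ i j))
      (hlk : StronglyEdgeDecomposable (linkOf Γ {i, j})) :
      StronglyEdgeDecomposable Γ

/-- A shifted complex: `F ∈ Γ`, `i ∈ F`, `i < j`, `j ∈ V` imply `(F \ {i}) ∪ {j} ∈ Γ`. -/
def ShiftedComplex (V : Finset ℕ) (Γ : Set (Finset ℕ)) : Prop :=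
  ∀ F ∈ Γ, ∀ i ∈ F, ∀ j, i < j → j ∈ V → insert j (F.erase i) ∈ Γ

/-- A `d`-subset `F ⊆ [n]` is admissible if `n - k ∉ F` implies `[n-d+k, n-k-1] ⊆ F`. -/
def Admissible (n d : ℕ) (F : Finset ℕ) : Prop :=
  F ⊆ Finset.Icc 1 n ∧ F.card = d ∧
    ∀ k < n, (n - k) ∉ F → Finset.Icc (n - d + k) (n - k - 1) ⊆ F

/-- `Δ(n,d)`, the complex generated by all admissible `d`-subsets of `[n]`; by a theorem of
Kalai this is the symmetric algebraic shifted complex `Δˢ(C(n,d))` of the boundary complex of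
the cyclic `d`-polytope with `n` vertices. -/
def DeltaC (n d : ℕ) : Set (Finset ℕ) :=
  if d = 0 then {(∅ : Finset ℕ)} else {G | ∃ F, Admissible n d F ∧ G ⊆ F}

/-- The increasing enumeration of `V`, as a map `{1, …, |V|} → V ⊆ ℕ` (identity elsewhere). -/
noncomputable def vlabel (V : Finset ℕ) (i : ℕ) : ℕ :=
  if h : i - 1 < V.card then (((V.orderIsoOfFin rfl) ⟨i - 1, h⟩ : V) : ℕ) else i

/-- `Δ(V,d)`: the complex `Δ(|V|,d)` relabeled order-isomorphically onto the vertex set `V`. -/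
noncomputable def DeltaV (V : Finset ℕ) (d : ℕ) : Set (Finset ℕ) :=
  (fun G : Finset ℕ => G.image (vlabel V)) '' DeltaC V.card d
/-! Squeezed balls and spheres (Kalai). Monomials on `[m]` are represented as multisets. -/

/-- `U` is a shifted order ideal of monomials on `[m]`: it contains `1` and all variables
`x_1,…,x_m`, is closed under divisibility, and `u·x_i ∈ U`, `i < j ≤ m` imply `u·x_j ∈ U`.
(A monomial is encoded as the multiset of its variable indices.) -/
def IsShiftedOrderIdeal (m : ℕ) (U : Set (Multiset ℕ)) : Prop :=
  (∀ u ∈ U, ∀ i ∈ u, i ∈ Finset.Icc 1 m) ∧ (0 : Multiset ℕ) ∈ U ∧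
    (∀ i ∈ Finset.Icc 1 m, ({i} : Multiset ℕ) ∈ U) ∧
    (∀ u ∈ U, ∀ v, v ≤ u → v ∈ U) ∧
    (∀ u : Multiset ℕ, ∀ i j : ℕ, i < j → j ≤ m → (i ::ₘ u) ∈ U → (j ::ₘ u) ∈ U)

/-- For a monomial `u = x_{i_1}⋯x_{i_k}` (`i_1 ≤ … ≤ i_k`), the `(d+1)`-set
`F_d(u) = {i_1, i_1+1} ∪ {i_2+2, i_2+3} ∪ ⋯ ∪ {i_k+2(k-1), i_k+2k-1} ∪ [n+2k-d, n]`. -/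
noncomputable def Fd (n d : ℕ) (u : Multiset ℕ) : Finset ℕ :=
  (Finset.range (Multiset.card u)).biUnion
      (fun j => {(u.sort (· ≤ ·)).getD j 0 + 2 * j, (u.sort (· ≤ ·)).getD j 0 + 2 * j + 1}) ∪
    Finset.Icc (n + 2 * Multiset.card u - d) n

/-- The squeezed `d`-ball `B_d(U)`: the complex generated by `{F_d(u) : u ∈ U}`. -/
def squeezedBall (n d : ℕ) (U : Set (Multiset ℕ)) : Set (Finset ℕ) :=
  {G | ∃ u ∈ U, G ⊆ Fd n d u}

/-- The boundary of a pure `d`-dimensional complex `B`: the subcomplex generated by the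
`(d-1)`-dimensional faces (cardinality-`d` faces) contained in exactly one facet. -/
noncomputable def complexBoundary (d : ℕ) (B : Set (Finset ℕ)) : Set (Finset ℕ) :=
  {F | ∃ G, F ⊆ G ∧ G ∈ B ∧ G.card = d ∧
    {H | H ∈ B ∧ H.card = d + 1 ∧ G ⊆ H}.ncard = 1}

/-- The squeezed `(d-1)`-sphere `S_d(U) = ∂ B_d(U)`. -/
noncomputable def squeezedSphere (n d : ℕ) (U : Set (Multiset ℕ)) : Set (Finset ℕ) :=
  complexBoundary d (squeezedBall n d U)

/-! The Stanley–Reisner ideal, the degree reverse lexicographic order, initial ideals and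
generic initial ideals in the polynomial ring `K[x_1,…,x_n]`, realized as
`MvPolynomial (Fin n) K` with the variable `x_i` being `X ⟨i-1⟩`. -/

/-- The squarefree monomial `x_F = ∏_{i ∈ F} x_i` (variable `x_i`, `1 ≤ i ≤ n`, is `X ⟨i-1⟩`). -/
noncomputable def faceMonomial (K : Type*) [CommRing K] (n : ℕ) (F : Finset ℕ) :
    MvPolynomial (Fin n) K :=
  ∏ a ∈ Finset.univ.filter (fun a : Fin n => (a : ℕ) + 1 ∈ F), MvPolynomial.X a

/-- The Stanley–Reisner ideal of a complex `Γ` on `[n]`, generated by the squarefree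
monomials `x_F` with `F ⊆ [n]`, `F ∉ Γ`. -/
noncomputable def srIdeal (K : Type*) [CommRing K] (n : ℕ) (Γ : Set (Finset ℕ)) :
    Ideal (MvPolynomial (Fin n) K) :=
  Ideal.span {f | ∃ F : Finset ℕ, F ⊆ Finset.Icc 1 n ∧ F ∉ Γ ∧ f = faceMonomial K n F}

/-- The degree reverse lexicographic order (induced by `x_1 > x_2 > ⋯`, smaller index =
bigger variable): `u < v` iff `deg u < deg v`, or degrees agree and at the largest index
where `u, v` differ, `u` has the larger exponent. -/
def DegRevLexLT {σ : Type*} [LinearOrder σ] (u v : σ →₀ ℕ) : Prop :=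
  (u.sum fun _ e => e) < (v.sum fun _ e => e) ∨
    ((u.sum fun _ e => e) = (v.sum fun _ e => e) ∧
      ∃ k, v k < u k ∧ ∀ l, k < l → u l = v l)

/-- The initial ideal of `I` w.r.t. the degree reverse lexicographic order: the ideal
spanned by the leading monomials of the elements of `I`. -/
noncomputable def initialIdeal {σ : Type*} [LinearOrder σ] {K : Type*} [Field K]
    (I : Ideal (MvPolynomial σ K)) : Ideal (MvPolynomial σ K) :=
  Ideal.span {m | ∃ f ∈ I, ∃ u ∈ f.support, m = MvPolynomial.monomial u (1 : K) ∧
    ∀ v ∈ f.support, v ≠ u → DegRevLexLT v u}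

/-- The linear change of coordinates of `K[x_1,…,x_n]` associated with a matrix `M`,
`x_j ↦ ∑_i M_{ij} x_i`. -/
noncomputable def genLin {K : Type*} [CommRing K] {n : ℕ} (M : Matrix (Fin n) (Fin n) K) :
    MvPolynomial (Fin n) K →ₐ[K] MvPolynomial (Fin n) K :=
  MvPolynomial.aeval (fun j => ∑ a : Fin n, MvPolynomial.C (M a j) * MvPolynomial.X a)

/-- `J` is the generic initial ideal (w.r.t. degrevlex) of `I`: there is a nonempty Zariski
open subset `U ⊆ GL_n(K)` (the nonvanishing locus of a nonzero polynomial in the matrix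
entries) such that `in(φ(I)) = J` for every `φ ∈ U`. -/
def IsGin {K : Type*} [Field K] {n : ℕ} (I J : Ideal (MvPolynomial (Fin n) K)) : Prop :=
  ∃ p : MvPolynomial (Fin n × Fin n) K, p ≠ 0 ∧
    ∀ M : Matrix (Fin n) (Fin n) K, IsUnit M.det →
      MvPolynomial.eval (fun q => M q.1 q.2) p ≠ 0 →
      initialIdeal (Ideal.map (genLin M) I) = J

/-- The set `G(J)` of (exponent vectors of) minimal monomial generators of a monomial
ideal `J`. -/
def minimalMonomialGens {σ : Type*} {K : Type*} [Field K] (J : Ideal (MvPolynomial σ K)) :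
    Set (σ →₀ ℕ) :=
  {u | MvPolynomial.monomial u (1 : K) ∈ J ∧
    ∀ v : σ →₀ ℕ, v ≤ u → MvPolynomial.monomial v (1 : K) ∈ J → v = u}

/-- The squarefree operation `Φ` on exponent vectors:
`x_{i_1} x_{i_2} ⋯ x_{i_k} ↦ {i_1, i_2+1, …, i_k+k-1}` (`i_1 ≤ i_2 ≤ ⋯ ≤ i_k`). -/
noncomputable def sqfreeOp {n : ℕ} (u : Fin n →₀ ℕ) : Finset ℕ :=
  (List.zipWith (· + ·)
      ((u.toMultiset.map (fun a : Fin n => (a : ℕ) + 1)).sort (· ≤ ·))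
      (List.range (Multiset.card (u.toMultiset)))).toFinset

/-- `Δs` is the symmetric algebraic shifted complex of `Γ`: its Stanley–Reisner ideal is
`Φ(Gin(I_Γ))`, i.e. `Δs` consists of the `F ⊆ [n]` containing no `Φ(u)`, `u ∈ G(Gin(I_Γ))`. -/
def IsSymmetricShift (K : Type*) [Field K] (n : ℕ) (Γ Δs : Set (Finset ℕ)) : Prop :=
  ∃ J : Ideal (MvPolynomial (Fin n) K), IsGin (srIdeal K n Γ) J ∧
    Δs = {F | F ⊆ Finset.Icc 1 n ∧ ∀ u ∈ minimalMonomialGens J, ¬ sqfreeOp u ⊆ F}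

/-- The exponent vector (in `K[x_1,…,x_n]`) of a monomial given as a multiset. -/
noncomputable def multisetToExp (n : ℕ) (u : Multiset ℕ) : Fin n →₀ ℕ :=
  Finsupp.equivFunOnFinite.symm (fun a : Fin n => u.count ((a : ℕ) + 1))
/-! The exterior algebra `E = ⋀⟨e_1, e_2, …⟩` over `K`, exterior face ideals, the reverse
lexicographic order, initial ideals and exterior algebraic shifting. We realize `E` as the
exterior algebra of the `K`-module `ℕ → K`, with `e_i` the image of `Pi.single i 1`. -/

/-- The exterior algebra `⋀ (ℕ → K)` hosting all the exterior face ideals. -/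
abbrev ExtAlg (K : Type*) [Field K] := ExteriorAlgebra K (ℕ → K)

/-- The exterior monomial `e_F = e_{i_1} ∧ ⋯ ∧ e_{i_k}` for `F = {i_1 < ⋯ < i_k}`. -/
noncomputable def eMon (K : Type*) [Field K] (F : Finset ℕ) : ExtAlg K :=
  ((F.sort (· ≤ ·)).map (fun i => ExteriorAlgebra.ι K (Pi.single i (1 : K)))).prod

/-- The exterior face ideal `J_Γ` of a complex `Γ` on the vertex set `V`, generated by the
monomials `e_F` with `F ⊆ V`, `F ∉ Γ`. -/
noncomputable def extFaceIdeal (K : Type*) [Field K] (V : Finset ℕ) (Γ : Set (Finset ℕ)) :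
    Ideal (ExtAlg K) :=
  Ideal.span {x | ∃ F : Finset ℕ, F ⊆ V ∧ F ∉ Γ ∧ x = eMon K F}

/-- The alternating form computing the determinant of the coordinates indexed by `F`. -/
noncomputable def detCoeffAlt (K : Type*) [Field K] (F : Finset ℕ) :
    (ℕ → K) [⋀^Fin F.card]→ₗ[K] K :=
  (Matrix.detRowAlternating).compLinearMap
    (LinearMap.funLeft K K (fun b : Fin F.card => ((F.orderIsoOfFin rfl b : F) : ℕ)))

/-- The coefficient functional of the basis monomial `e_F`: the linear functional on the
exterior algebra giving the coefficient of `e_F` in the monomial basis expansion. -/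
noncomputable def extCoeff (K : Type*) [Field K] (F : Finset ℕ) : ExtAlg K →ₗ[K] K :=
  ExteriorAlgebra.liftAlternating
    (fun i => if h : i = F.card then (detCoeffAlt K F).domDomCongr (finCongr h.symm) else 0)

/-- The reverse lexicographic order (induced by `1 > 2 > ⋯`) on exterior monomials:
`F < G` iff `|F| < |G|`, or the cardinalities agree and the largest element of the
symmetric difference `F Δ G` belongs to `F`. -/
def RevLexLT (F G : Finset ℕ) : Prop :=
  F.card < G.card ∨ (F.card = G.card ∧
    ∃ k, k ∈ F ∧ k ∉ G ∧ ∀ l, k < l → (l ∈ F ↔ l ∈ G))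

/-- The initial ideal of an ideal `I` of the exterior algebra w.r.t. the reverse
lexicographic order: spanned by the leading monomials `e_F` of the elements of `I`. -/
noncomputable def extInitialIdeal (K : Type*) [Field K] (I : Ideal (ExtAlg K)) :
    Ideal (ExtAlg K) :=
  Ideal.span {x | ∃ y ∈ I, ∃ F : Finset ℕ, x = eMon K F ∧ extCoeff K F y ≠ 0 ∧
    ∀ G : Finset ℕ, extCoeff K G y ≠ 0 → G ≠ F → RevLexLT G F}

/-- The linear change of coordinates of `span{e_i : i ∈ V}` (identity elsewhere)
associated with a `|V| × |V|` matrix `M`. -/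
noncomputable def extLinMap (K : Type*) [Field K] (V : Finset ℕ)
    (M : Matrix (Fin V.card) (Fin V.card) K) : (ℕ → K) →ₗ[K] (ℕ → K) where
  toFun v k :=
    if h : k ∈ V then
      ∑ a : Fin V.card,
        M ((V.orderIsoOfFin rfl).symm ⟨k, h⟩) a * v ((V.orderIsoOfFin rfl a : V) : ℕ)
    else v k
  map_add' x y := by
    funext k
    by_cases h : k ∈ V <;> simp [h, mul_add, Finset.sum_add_distrib]
  map_smul' c x := by
    funext k
    by_cases h : k ∈ V <;> simp [h, Finset.mul_sum, mul_left_comm]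

/-- The algebra automorphism of the exterior algebra induced by `extLinMap`. -/
noncomputable def extAlgMap (K : Type*) [Field K] (V : Finset ℕ)
    (M : Matrix (Fin V.card) (Fin V.card) K) : ExtAlg K →ₐ[K] ExtAlg K :=
  ExteriorAlgebra.lift K ⟨(ExteriorAlgebra.ι K).comp (extLinMap K V M),
    fun _ => ExteriorAlgebra.ι_sq_zero _⟩

/-- `Δe` is the exterior algebraic shifted complex of `Γ` (as complexes on the vertex set
`V`): `J_{Δe} = Gin(J_Γ)`, where the generic initial ideal is witnessed by a nonempty
Zariski open subset of `GL(V)` (the nonvanishing locus of a nonzero polynomial in the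
matrix entries). -/
def IsExteriorShift (K : Type*) [Field K] (V : Finset ℕ) (Γ Δe : Set (Finset ℕ)) : Prop :=
  ∃ p : MvPolynomial (Fin V.card × Fin V.card) K, p ≠ 0 ∧
    ∀ M : Matrix (Fin V.card) (Fin V.card) K, IsUnit M.det →
      MvPolynomial.eval (fun q => M q.1 q.2) p ≠ 0 →
      extInitialIdeal K (Ideal.map (extAlgMap K V M) (extFaceIdeal K V Γ)) =
        extFaceIdeal K V Δe

/-- The simplicial complex on `V` whose exterior face ideal is the (monomial) ideal `J`. -/
noncomputable def complexOfExtIdeal (K : Type*) [Field K] (V : Finset ℕ)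
    (J : Ideal (ExtAlg K)) : Set (Finset ℕ) :=
  {F | F ⊆ V ∧ eMon K F ∉ J}

/-- Nongeneric exterior shifting `Δ_φ(Γ)`, defined by `J_{Δ_φ(Γ)} = in(φ(J_Γ))` for an
individual linear change of coordinates `φ` given by the matrix `M`. -/
noncomputable def DeltaPhi (K : Type*) [Field K] (V : Finset ℕ)
    (M : Matrix (Fin V.card) (Fin V.card) K) (Γ : Set (Finset ℕ)) : Set (Finset ℕ) :=
  complexOfExtIdeal K V (extInitialIdeal K (Ideal.map (extAlgMap K V M) (extFaceIdeal K V Γ)))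

/-- The shifting-theoretic upper bound relation for a `(d-1)`-dimensional complex `Γ` on the
vertex set `V`: `Δᵉ(Γ) ⊆ Δ(V,d)`. -/
def ShiftingUBR (K : Type*) [Field K] (V : Finset ℕ) (d : ℕ) (Γ : Set (Finset ℕ)) : Prop :=
  ∀ Δe, IsExteriorShift K V Γ Δe → Δe ⊆ DeltaV V d
/-! Graded pieces, linear systems of parameters, the Cohen–Macaulay property and the strong
Lefschetz property for graded quotients `A = K[x_1,…,x_n]/I`. -/

/-- The degree-`k` homogeneous component of the graded quotient `S/I` (the image of the
degree-`k` homogeneous polynomials). -/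
noncomputable def quotPiece {K : Type*} [Field K] {n : ℕ}
    (I : Ideal (MvPolynomial (Fin n) K)) (k : ℕ) :
    Submodule K (MvPolynomial (Fin n) K ⧸ I) :=
  (MvPolynomial.homogeneousSubmodule (Fin n) K k).map (Ideal.Quotient.mkₐ K I).toLinearMap

/-- `θ_1, …, θ_d` is a linear system of parameters of `S/I`: the `θ_a` are linear forms and
the quotient `S/(I + (θ_1,…,θ_d))` has Krull dimension `≤ 0`. -/
def IsLSOP {K : Type*} [Field K] {n : ℕ} (I : Ideal (MvPolynomial (Fin n) K)) (d : ℕ)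
    (θ : Fin d → MvPolynomial (Fin n) K) : Prop :=
  (∀ a, (θ a).IsHomogeneous 1) ∧
    ringKrullDim (MvPolynomial (Fin n) K ⧸ (I ⊔ Ideal.span (Set.range θ))) ≤ 0

set_option synthInstance.maxHeartbeats 1000000 in
/-- The graded quotient `A = S/I` is Cohen–Macaulay: a linear system of parameters of
length `d = dim A` forms a regular `A`-sequence. -/
def IsCMIdeal {K : Type*} [Field K] {n : ℕ} (I : Ideal (MvPolynomial (Fin n) K)) : Prop :=
  ∃ d : ℕ, ringKrullDim (MvPolynomial (Fin n) K ⧸ I) = d ∧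
    ∃ θ : Fin d → MvPolynomial (Fin n) K, IsLSOP I d θ ∧
      RingTheory.Sequence.IsRegular (MvPolynomial (Fin n) K ⧸ I)
        ((List.ofFn θ).map (⇑(Ideal.Quotient.mk I)))

/-- The graded quotient `A = S/I` has the strong Lefschetz property: `A` is Cohen–Macaulay
and there are an l.s.o.p. `θ_1, …, θ_d` (`d = dim A`) and a linear form `ω` such that
`ω^{s-2i} : (A/θA)_i → (A/θA)_{s-i}` is bijective for `0 ≤ i ≤ s/2`, where
`s = max{k : (A/θA)_k ≠ 0}`. -/
def HasSLPIdeal {K : Type*} [Field K] {n : ℕ} (I : Ideal (MvPolynomial (Fin n) K)) : Prop :=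
  IsCMIdeal I ∧
    ∃ d : ℕ, ringKrullDim (MvPolynomial (Fin n) K ⧸ I) = d ∧
      ∃ θ : Fin d → MvPolynomial (Fin n) K, IsLSOP I d θ ∧
        ∃ ω : MvPolynomial (Fin n) K, ω.IsHomogeneous 1 ∧
          ∃ s : ℕ,
            (quotPiece (I ⊔ Ideal.span (Set.range θ)) s ≠ ⊥ ∧
              ∀ k, s < k → quotPiece (I ⊔ Ideal.span (Set.range θ)) k = ⊥) ∧
            ∀ i : ℕ, 2 * i ≤ s →
              Set.BijOn
                (fun x => (Ideal.Quotient.mk (I ⊔ Ideal.span (Set.range θ)) ω) ^ (s - 2 * i) * x)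
                (quotPiece (I ⊔ Ideal.span (Set.range θ)) i)
                (quotPiece (I ⊔ Ideal.span (Set.range θ)) (s - i))

/-- A simplicial complex is Cohen–Macaulay over `K` if its Stanley–Reisner ring is. -/
def ComplexCM (K : Type*) [Field K] (n : ℕ) (Γ : Set (Finset ℕ)) : Prop :=
  IsCMIdeal (srIdeal K n Γ)

/-- A `(d-1)`-dimensional complex `Γ` has the strong Lefschetz property if `h_d(Γ) > 0` and
its Stanley–Reisner ring has the strong Lefschetz property. -/
def ComplexSLP (K : Type*) [Field K] (n d : ℕ) (Γ : Set (Finset ℕ)) : Prop :=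
  0 < hvec d Γ d ∧ HasSLPIdeal (srIdeal K n Γ)

/-- A `1`-dimensional simplicial sphere (a cycle): a complex all of whose faces are edges or
smaller, every vertex lying in exactly two edges, whose edge graph is connected. -/
def IsCycleComplex (V : Finset ℕ) (Γ : Set (Finset ℕ)) : Prop :=
  SimplicialComplexOn V Γ ∧ (∀ F ∈ Γ, F.card ≤ 2) ∧
    (∀ v ∈ V, {e | e ∈ Γ ∧ e.card = 2 ∧ v ∈ e}.ncard = 2) ∧
    ∀ u ∈ V, ∀ v ∈ V,
      Relation.ReflTransGen (fun a b : ℕ => ({a, b} : Finset ℕ) ∈ Γ) u v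

/-!
A facet of a squeezed ball is the same thing as a `(d + 1)`-subset `F` of `[n]` whose maximal
intervals not ending at `n` have even size, and the facets of `B_d(U)` are closed under moving
elements to the right. For such an `F` and `v ∈ F` there are few even-block sets
`(F \ {v}) ∪ {w}` with `w ∉ F`: if the number of elements of `F` below `v` is even, then `w` is
the first gap above `v`, and if it is odd, then `w` is the last gap below `v`.

The Link condition asks that `H ∪ {1, 2}` be a boundary face if `H ∪ {1}` and `H ∪ {2}` are. If
not, let `F ⊇ H ∪ {1, 2}` be a facet with least sum of elements. No `F \ {v}` with
`v ∉ H ∪ {1, 2}` is in the boundary, so by minimality every such `v` can be moved to the right;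
hence `F` has an even number of elements below each of them. By parity, every even-block set
containing `H ∪ {2}` then arises from `F` by moving elements to the right, so it is a facet. Thus
the facet `F' ⊇ H ∪ {2}` whose boundary face `F' \ {v}` contains `H ∪ {2}` admits no exchange of
`v` at all, which makes `[v, n]` a part of `F'` and then of `F`, contradicting that `v` can be
moved to the right in `F`.

The shift is a formal consequence of the Link condition and of the descriptions of the contraction
and of the link.
-/

/-! ### Counting and enumerating the elements of a finite set of natural numbers -/

section Count

variable {F F' : Finset ℕ} {v w x n i : ℕ}

theorem count_mem_eq_card (h : ∀ y ∈ F, y < x) : Nat.count (· ∈ F) x = F.card := by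
  rw [Nat.count_eq_card_filter_range]
  congr 1
  ext y
  simpa using h y

theorem count_mem_insert_erase (hv : v ∈ F) (hw : w ∉ F) (x : ℕ) :
    Nat.count (· ∈ insert w (F.erase v)) x + (if v < x then 1 else 0) =
      Nat.count (· ∈ F) x + (if w < x then 1 else 0) := by
  induction x with
  | zero => simp
  | succ x ih => grind

theorem Icc_subset_iff_count_add_eq_card (hF : F ⊆ Finset.Icc 1 n) (hv : v ≤ n + 1) :
    Finset.Icc v n ⊆ F ↔ Nat.count (· ∈ F) v + (n + 1 - v) = F.card := by
  have hcard : Nat.count (· ∈ F) (v + (n + 1 - v)) = F.card :=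
    count_mem_eq_card fun y hy => by grind
  rw [← hcard, Nat.count_add, Nat.add_left_cancel_iff, eq_comm, Nat.count_iff_forall]
  constructor
  · exact fun h k hk => h (Finset.mem_Icc.2 ⟨by omega, by omega⟩)
  · intro h x hx
    obtain ⟨hvx, hxn⟩ := Finset.mem_Icc.1 hx
    simpa [hvx] using h (x - v) (by omega)

theorem nth_mem_finset (hi : i < F.card) : Nat.nth (· ∈ F) i ∈ F :=
  Nat.nth_mem i fun hf => by simpa using hi

theorem count_mem_nth (hi : i < F.card) : Nat.count (· ∈ F) (Nat.nth (· ∈ F) i) = i :=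
  Nat.count_nth fun hf => by simpa using hi

theorem nth_mem_add_le_nth_add {k : ℕ} (h : i + k < F.card) :
    Nat.nth (· ∈ F) i + k ≤ Nat.nth (· ∈ F) (i + k) := by
  induction k with
  | zero => simp
  | succ k ih =>
    have hlt : Nat.nth (· ∈ F) (i + k) < Nat.nth (· ∈ F) (i + k + 1) :=
      Nat.nth_lt_nth' (Nat.lt_succ_self _) fun hf => by simpa [add_assoc] using h
    exact (Nat.succ_le_succ (ih (by omega))).trans hlt

theorem nth_mem_le_nth_mem (hi : i < F.card) (hi' : i < F'.card)
    (h : ∀ x, Nat.count (· ∈ F') x ≤ Nat.count (· ∈ F) x) :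
    Nat.nth (· ∈ F) i ≤ Nat.nth (· ∈ F') i := by
  by_contra! hlt
  have hF' : Nat.count (· ∈ F') (Nat.nth (· ∈ F') i + 1) = i + 1 := by
    rw [Nat.count_succ, count_mem_nth hi', if_pos (nth_mem_finset hi')]
  have hF : Nat.count (· ∈ F) (Nat.nth (· ∈ F') i + 1) ≤ i :=
    (Nat.count_monotone _ hlt).trans_eq (count_mem_nth hi)
  have := h (Nat.nth (· ∈ F') i + 1)
  omega

end Count

theorem exists_eq_insert_erase {α : Type*} [DecidableEq α] {F F' : Finset α} {v : α} (hv : v ∈ F)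
    (hcard : F'.card = F.card) (hne : F' ≠ F) (hsub : F.erase v ⊆ F') :
    ∃ w ∉ F, F' = insert w (F.erase v) := by
  obtain ⟨w, hw, rfl⟩ := Finset.exists_eq_insert_iff.2
    ⟨hsub, (Finset.card_erase_add_one hv).trans hcard.symm⟩
  have hwv : w ≠ v := by
    rintro rfl
    exact hne (Finset.insert_erase hv)
  exact ⟨w, fun hwF => hw (Finset.mem_erase.2 ⟨hwv, hwF⟩), rfl⟩

/-! ### Sets with even blocks -/

/-- The facets of the largest squeezed `d`-ball on `[n]`: the `(d+1)`-subsets of `[n]` in which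
every maximal interval not ending at `n` has even size (cf. Gale's evenness condition). This is
encoded as: every non-member has an even number of members below it. -/
structure EvenBlocks (n d : ℕ) (F : Finset ℕ) : Prop where
  subset_Icc : F ⊆ Finset.Icc 1 n
  card_eq : F.card = d + 1
  even_count : ∀ x ∈ Finset.Icc 1 n, x ∉ F → Even (Nat.count (· ∈ F) x)

namespace EvenBlocks

variable {n d : ℕ} {F F' : Finset ℕ} {v w x : ℕ}

theorem count_one (hF : EvenBlocks n d F) : Nat.count (· ∈ F) 1 = 0 := by
  have h0 : 0 ∉ F := fun h => by simpa using hF.subset_Icc h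
  simp [Nat.count_succ, h0]

theorem two_mem (hF : EvenBlocks n d F) (hn : 2 ≤ n) (h1 : 1 ∈ F) : 2 ∈ F := by
  by_contra h2
  have hcount : Nat.count (· ∈ F) 2 = 1 := by rw [Nat.count_succ, hF.count_one, if_pos h1]
  simpa [hcount] using hF.even_count 2 (Finset.mem_Icc.2 ⟨one_le_two, hn⟩) h2

theorem count_eq_card (hF : EvenBlocks n d F) (hx : n < x) : Nat.count (· ∈ F) x = d + 1 := by
  rw [← hF.card_eq]
  exact count_mem_eq_card fun y hy => (Finset.mem_Icc.1 (hF.subset_Icc hy)).2.trans_lt hx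

theorem Icc_subset_iff (hF : EvenBlocks n d F) (hv : v ≤ n + 1) :
    Finset.Icc v n ⊆ F ↔ Nat.count (· ∈ F) v + (n + 1 - v) = d + 1 := by
  rw [Icc_subset_iff_count_add_eq_card hF.subset_Icc hv, hF.card_eq]

theorem not_Icc_subset (hF : EvenBlocks n d F) (hn : d + 1 < n) : ¬ Finset.Icc 1 n ⊆ F := by
  intro h
  have := Finset.card_le_card h
  rw [Nat.card_Icc, hF.card_eq] at this
  omega

theorem even_count_iff_lt (hF : EvenBlocks n d F) (hv : v ∈ F) (hw : w ∉ F)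
    (hF' : EvenBlocks n d (insert w (F.erase v))) : Even (Nat.count (· ∈ F) v) ↔ v < w := by
  have heven := hF'.even_count v (hF.subset_Icc hv) (by grind)
  have hcount := count_mem_insert_erase hv hw v
  grind

theorem exchange (hF : EvenBlocks n d F) (hv : v ∈ F) (hw : w ∉ F) (hwn : w ∈ Finset.Icc 1 n)
    (hbetween : ∀ x ∈ Finset.Icc 1 n, x ∉ F → x ≠ w → (v < x ↔ w < x))
    (hparity : Even (Nat.count (· ∈ F) v) ↔ v < w) :
    EvenBlocks n d (insert w (F.erase v)) where
  subset_Icc := Finset.insert_subset hwn ((Finset.erase_subset v F).trans hF.subset_Icc)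
  card_eq := by
    rw [Finset.card_insert_of_notMem (by simp [hw]), Finset.card_erase_add_one hv, hF.card_eq]
  even_count x hx hxF := by
    have hcount := count_mem_insert_erase hv hw x
    rcases eq_or_ne x v with rfl | hxv
    · grind
    · have hxw : x ≠ w := fun h => hxF (by simp [h])
      have hxF' : x ∉ F := fun h => hxF (by simp [hxv, h])
      simp only [hbetween x hx hxF' hxw, add_left_inj] at hcount
      exact hcount ▸ hF.even_count x hx hxF'

theorem exists_exchange_of_even (hF : EvenBlocks n d F) (hv : v ∈ F)
    (heven : Even (Nat.count (· ∈ F) v)) (hgap : ¬ Finset.Icc v n ⊆ F) :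
    ∃ w ∉ F, EvenBlocks n d (insert w (F.erase v)) := by
  have hv1 := Finset.mem_Icc.1 (hF.subset_Icc hv)
  obtain ⟨w, hw, hmin⟩ :=
    (Finset.Icc v n \ F).exists_min_image id (Finset.sdiff_nonempty.2 hgap)
  obtain ⟨hwn, hwF⟩ := Finset.mem_sdiff.1 hw
  have hvw : v < w := by grind
  refine ⟨w, hwF, hF.exchange hv hwF (by grind) (fun x hx hxF hxw => ?_) (iff_of_true heven hvw)⟩
  constructor
  · intro hvx
    exact lt_of_le_of_ne (hmin x (by grind)) hxw.symm
  · exact hvw.trans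

theorem exists_exchange_of_odd (hF : EvenBlocks n d F) (hv : v ∈ F)
    (hodd : ¬ Even (Nat.count (· ∈ F) v)) (hgap : ¬ Finset.Icc 1 v ⊆ F) :
    ∃ w ∉ F, EvenBlocks n d (insert w (F.erase v)) := by
  have hv1 := Finset.mem_Icc.1 (hF.subset_Icc hv)
  obtain ⟨w, hw, hmax⟩ :=
    (Finset.Icc 1 v \ F).exists_max_image id (Finset.sdiff_nonempty.2 hgap)
  obtain ⟨hwn, hwF⟩ := Finset.mem_sdiff.1 hw
  have hwv : w < v := by grind
  refine ⟨w, hwF, hF.exchange hv hwF (by grind) (fun x hx hxF _ => ?_)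
    (iff_of_false hodd hwv.not_gt)⟩
  constructor
  · exact hwv.trans
  · intro hwx
    by_contra! hxv
    exact hwx.not_ge (hmax x (by grind))

theorem exists_exchange (hF : EvenBlocks n d F) (hv : v ∈ F) (h1 : 1 ∉ F.erase v)
    (hgap : Even (Nat.count (· ∈ F) v) → ¬ Finset.Icc v n ⊆ F) :
    ∃ w ∉ F, EvenBlocks n d (insert w (F.erase v)) := by
  by_cases heven : Even (Nat.count (· ∈ F) v)
  · exact hF.exists_exchange_of_even hv heven (hgap heven)
  · refine hF.exists_exchange_of_odd hv heven fun hIcc => ?_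
    have hv1 := (Finset.mem_Icc.1 (hF.subset_Icc hv)).1
    obtain rfl : 1 = v :=
      by_contra fun h => h1 (Finset.mem_erase.2 ⟨h, hIcc (Finset.mem_Icc.2 ⟨le_rfl, hv1⟩)⟩)
    exact heven (by simp [hF.count_one])

theorem exchange_unique (hF : EvenBlocks n d F) (hv : v ∈ F) (heven : Even (Nat.count (· ∈ F) v))
    {w' : ℕ} (hw : w ∉ F) (hw' : w' ∉ F) (hFw : EvenBlocks n d (insert w (F.erase v)))
    (hFw' : EvenBlocks n d (insert w' (F.erase v))) : w = w' := by
  wlog hlt : w < w' generalizing w w'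
  · rcases (not_lt.1 hlt).eq_or_lt with h | h
    · exact h.symm
    · exact (this hw' hw hFw' hFw h).symm
  have hvw : v < w := (hF.even_count_iff_lt hv hw hFw).1 heven
  have hwn : w ∈ Finset.Icc 1 n := hFw.subset_Icc (Finset.mem_insert_self _ _)
  have hcount := count_mem_insert_erase hv hw' w
  have h := hF.even_count w hwn hw
  have h' := hFw'.even_count w hwn (by grind)
  grind

/-- At an element of `F \ F'` both counts are even, so there the difference of the counts is even
and cannot change its sign from negative to nonnegative, nor exceed `1`. -/
theorem count_le_count (hF : EvenBlocks n d F) (hF' : EvenBlocks n d F')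
    (hdiff : ∀ v ∈ F, v ∉ F' → Even (Nat.count (· ∈ F) v)) (x : ℕ) :
    Nat.count (· ∈ F') x ≤ Nat.count (· ∈ F) x ∧
      Nat.count (· ∈ F) x ≤ Nat.count (· ∈ F') x + 1 := by
  have heven : ∀ z ∈ F, z ∉ F' →
      Even (Nat.count (· ∈ F) z) ∧ Even (Nat.count (· ∈ F') z) := fun z hz hz' =>
    ⟨hdiff z hz hz', hF'.even_count z (hF.subset_Icc hz) hz'⟩
  constructor
  · by_contra! hlt
    have hpersist : ∀ y ≥ x, Nat.count (· ∈ F) y < Nat.count (· ∈ F') y := fun y hy => by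
      induction y, hy using Nat.le_induction with
      | base => exact hlt
      | succ z _ ih => grind
    have := hpersist (x + (n + 1)) (by omega)
    rw [hF.count_eq_card (by omega), hF'.count_eq_card (by omega)] at this
    exact this.false
  · induction x with
    | zero => simp
    | succ z ih => grind

theorem Icc_subset_of_Icc_subset (hF : EvenBlocks n d F) (hF' : EvenBlocks n d F')
    (hdiff : ∀ v ∈ F, v ∉ F' → Even (Nat.count (· ∈ F) v)) (hv : v ≤ n + 1)
    (heven : Even (Nat.count (· ∈ F) v)) (heven' : Even (Nat.count (· ∈ F') v))
    (hIcc : Finset.Icc v n ⊆ F') : Finset.Icc v n ⊆ F := by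
  have hle := hF.count_le_count hF' hdiff v
  have heq : Nat.count (· ∈ F) v = Nat.count (· ∈ F') v := by grind
  rwa [hF.Icc_subset_iff hv, heq, ← hF'.Icc_subset_iff hv]

end EvenBlocks

/-! ### Boundaries, links and contractions of pure complexes -/

section Complexes

variable {A Γ : Set (Finset ℕ)} {F W X : Finset ℕ} {e i j : ℕ}

theorem isLowerSet_complexBoundary (e : ℕ) (B : Set (Finset ℕ)) :
    IsLowerSet (complexBoundary e B) := by
  rintro F G hGF ⟨H, hFH, hH⟩
  exact ⟨H, hGF.trans hFH, hH⟩

theorem mem_complexBoundary_lowerClosure (hA : ∀ F ∈ A, F.card = e + 1) :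
    X ∈ complexBoundary e (lowerClosure A) ↔
      ∃ F ∈ A, ∃ v ∈ F, X ⊆ F.erase v ∧ ∀ F' ∈ A, F.erase v ⊆ F' → F' = F := by
  have hfacet : ∀ G, {H | H ∈ (lowerClosure A : Set (Finset ℕ)) ∧ H.card = e + 1 ∧ G ⊆ H} =
      {H | H ∈ A ∧ G ⊆ H} := by
    intro G
    ext H
    constructor
    · rintro ⟨⟨F, hF, hHF⟩, hH, hG⟩
      rw [Finset.eq_of_subset_of_card_le hHF (by rw [hA F hF, hH])]
      exact ⟨hF, hG.trans hHF⟩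
    · rintro ⟨hH, hG⟩
      exact ⟨subset_lowerClosure hH, hA H hH, hG⟩
  constructor
  · rintro ⟨G, hXG, -, hG, hone⟩
    rw [hfacet, Set.ncard_eq_one] at hone
    obtain ⟨F, hF⟩ := hone
    obtain ⟨hFA, hGF⟩ : F ∈ A ∧ G ⊆ F := hF.ge rfl
    obtain ⟨v, hv, rfl⟩ := Finset.exists_eq_insert_iff.2 ⟨hGF, by rw [hG, hA F hFA]⟩
    refine ⟨_, hFA, v, Finset.mem_insert_self v G, ?_, fun F' hF' hsub => hF.le ⟨hF', ?_⟩⟩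
    · rwa [Finset.erase_insert hv]
    · rwa [Finset.erase_insert hv] at hsub
  · rintro ⟨F, hF, v, hv, hXF, hunique⟩
    refine ⟨F.erase v, hXF, ⟨F, hF, F.erase_subset v⟩, ?_, ?_⟩
    · rw [Finset.card_erase_of_mem hv, hA F hF, Nat.add_sub_cancel]
    · rw [hfacet, Set.ncard_eq_one]
      refine ⟨F, Set.Subset.antisymm (fun F' hF' => hunique F' hF'.1 hF'.2) ?_⟩
      exact Set.singleton_subset_iff.2 ⟨hF, F.erase_subset v⟩

theorem linkOf_complexBoundary_lowerClosure (hA : ∀ F ∈ A, F.card = e + 1) (hW : W.card ≤ e) :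
    linkOf (complexBoundary e (lowerClosure A)) W =
      complexBoundary (e - W.card) (lowerClosure ((· \ W) '' {F ∈ A | W ⊆ F})) := by
  have hcard : ∀ G ∈ (· \ W) '' {F ∈ A | W ⊆ F}, G.card = e - W.card + 1 := by
    rintro _ ⟨F, ⟨hF, hWF⟩, rfl⟩
    have := hA F hF
    simp only [Finset.card_sdiff_of_subset hWF]
    omega
  ext X
  simp only [linkOf, Set.mem_ofPred_eq, mem_complexBoundary_lowerClosure hA,
    mem_complexBoundary_lowerClosure hcard, Set.exists_mem_image, Set.forall_mem_image]
  constructor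
  · rintro ⟨hdisj, F, hF, v, hv, hXF, hunique⟩
    rw [Finset.disjoint_left] at hdisj
    have hWF : W ⊆ F.erase v := Finset.subset_union_right.trans hXF
    refine ⟨F, ⟨hF, by grind⟩, v, by grind, by grind, fun F' hF' hsub => ?_⟩
    have hsub' : F.erase v ⊆ F' := fun x hx => by
      by_cases hxW : x ∈ W
      · exact hF'.2 hxW
      · exact Finset.sdiff_subset (hsub (by simp_all))
    rw [hunique F' hF'.1 hsub']
  · rintro ⟨F, ⟨hF, hWF⟩, v, hv, hXF, hunique⟩
    refine ⟨Finset.disjoint_left.2 (by grind), F, hF, v, by grind, by grind, fun F' hF' hsub => ?_⟩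
    have hWF' : W ⊆ F' := by grind
    rw [← Finset.sdiff_union_of_subset hWF', hunique ⟨hF', hWF'⟩ (by grind),
      Finset.sdiff_union_of_subset hWF]

theorem mem_contraction_of_subset_erase (hΓ : IsLowerSet Γ) (hi : i ∈ F)
    (hF : F.erase j ∈ Γ) (hX : X ⊆ F.erase i) : X ∈ contraction Γ i j := by
  have hXF : X ⊆ F := hX.trans (F.erase_subset i)
  by_cases hjX : j ∈ X
  · have hij : i ≠ j := (Finset.ne_of_mem_erase (hX hjX)).symm
    refine Or.inr ⟨insert i (X.erase j), hΓ ?_ hF, Finset.mem_insert_self _ _, by grind⟩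
    exact Finset.insert_subset (Finset.mem_erase.2 ⟨hij, hi⟩) (Finset.erase_subset_erase j hXF)
  · exact Or.inl ⟨hΓ (Finset.subset_erase.2 ⟨hXF, hjX⟩) hF, by grind⟩

theorem mem_insert_joinW_linkOf_iff (hΓ : IsLowerSet Γ) :
    (∃ F ∈ joinW {j} (linkOf Γ {i, j}), X = insert i F) ↔ i ∈ X ∧ insert j X ∈ Γ := by
  constructor
  · rintro ⟨_, ⟨W, hW, G, ⟨-, hG⟩, rfl⟩, rfl⟩
    refine ⟨Finset.mem_insert_self _ _, hΓ ?_ hG⟩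
    grind
  · rintro ⟨hi, hX⟩
    have hunion : X \ {i, j} ∪ {i, j} = insert j X := by grind
    exact ⟨X ∩ {j} ∪ X \ {i, j}, ⟨_, Finset.inter_subset_right, _,
      ⟨Finset.sdiff_disjoint, hunion ▸ hX⟩, rfl⟩, by grind⟩

theorem insert_mem_of_linkCondition (hlink : LinkCondition Γ i j) (hi : i ∈ F) (hj : j ∉ F)
    (hF : F ∈ Γ) (hF' : F.erase i ∪ {j} ∈ Γ) : insert j F ∈ Γ := by
  have hmem : F.erase i ∈ linkOf Γ {i} ∩ linkOf Γ {j} := by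
    refine ⟨⟨by simp, ?_⟩, by simp [hj], hF'⟩
    rwa [Finset.union_comm, ← Finset.insert_eq, Finset.insert_erase hi]
  have hunion : F.erase i ∪ {i, j} = insert j F := by grind
  exact hunion ▸ (hlink.le hmem).2

theorem shiftComplex_eq_of_linkCondition (hΓ : IsLowerSet Γ) (hij : i ≠ j)
    (hlink : LinkCondition Γ i j) :
    shiftComplex Γ i j =
      contraction Γ i j ∪ {H | ∃ F ∈ joinW {j} (linkOf Γ {i, j}), H = insert i F} := by
  ext H
  rw [Set.mem_union, Set.mem_ofPred_eq, mem_insert_joinW_linkOf_iff hΓ]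
  constructor
  · rintro ⟨F, hF, rfl⟩
    by_cases hi : i ∈ F
    · rw [shiftMap]
      split_ifs with hmove
      · exact Or.inl (Or.inr ⟨F, hF, hi, rfl⟩)
      · refine Or.inr ⟨hi, ?_⟩
        by_cases hj : j ∈ F
        · rwa [Finset.insert_eq_of_mem hj]
        · exact insert_mem_of_linkCondition hlink hi hj hF (by_contra fun h => hmove ⟨hi, hj, h⟩)
    · rw [shiftMap, if_neg fun h => hi h.1]
      exact Or.inl (Or.inl ⟨hF, hi⟩)
  · rintro ((⟨hH, hi⟩ | ⟨F, hF, hi, rfl⟩) | ⟨-, hH⟩)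
    · exact ⟨H, hH, if_neg fun h => hi h.1⟩
    · by_cases hmem : F.erase i ∪ {j} ∈ Γ
      · exact ⟨_, hmem, if_neg fun h => by simp [hij] at h⟩
      · refine ⟨F, hF, if_pos ⟨hi, fun hj => hmem (hΓ ?_ hF), hmem⟩⟩
        exact Finset.union_subset (F.erase_subset i) (Finset.singleton_subset_iff.2 hj)
    · refine ⟨H, hΓ (Finset.subset_insert j H) hH, if_neg fun h => h.2.2 (hΓ ?_ hH)⟩
      exact Finset.union_subset ((H.erase_subset i).trans (Finset.subset_insert j H)) (by simp)

end Complexes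

/-! ### Shifted families of sets with even blocks -/

/-- A family of sets with even blocks which is closed under moving elements to the right; the
facets of a squeezed ball form such a family. -/
structure ShiftedEvenFamily (n d : ℕ) (A : Set (Finset ℕ)) : Prop where
  evenBlocks : ∀ F ∈ A, EvenBlocks n d F
  up_closed : ∀ F ∈ A, ∀ F', EvenBlocks n d F' →
    (∀ x, Nat.count (· ∈ F') x ≤ Nat.count (· ∈ F) x) → F' ∈ A

namespace ShiftedEvenFamily

variable {n d : ℕ} {A : Set (Finset ℕ)} {F H T : Finset ℕ} {v w : ℕ}

theorem card_eq (hA : ShiftedEvenFamily n d A) : ∀ F ∈ A, F.card = d + 1 :=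
  fun F hF => (hA.evenBlocks F hF).card_eq

theorem pair_subset (hA : ShiftedEvenFamily n d A) (hn : 2 ≤ n) (hF : F ∈ A) (h1 : 1 ∈ F) :
    {1, 2} ⊆ F := by
  simp [Finset.insert_subset_iff, h1, (hA.evenBlocks F hF).two_mem hn h1]

theorem exchange_mem (hA : ShiftedEvenFamily n d A) (hF : F ∈ A) (hv : v ∈ F) (hw : w ∉ F)
    (hvw : v < w) (hE : EvenBlocks n d (insert w (F.erase v))) : insert w (F.erase v) ∈ A := by
  refine hA.up_closed F hF _ hE fun x => ?_
  have := count_mem_insert_erase hv hw x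
  grind

/-- Among the members containing `T`, take one with the least sum of elements. -/
theorem exists_minimal (hA : ShiftedEvenFamily n d A) (hT : T ∈ lowerClosure A)
    (hbdry : T ∉ complexBoundary d (lowerClosure A)) :
    ∃ F ∈ A, T ⊆ F ∧ ∀ v ∈ F, v ∉ T →
      Even (Nat.count (· ∈ F) v) ∧ ¬ Finset.Icc v n ⊆ F := by
  obtain ⟨F, ⟨hF, hTF⟩, hmin⟩ :=
    exists_minimalFor_of_wellFoundedLT (fun F => F ∈ A ∧ T ⊆ F) (fun F => ∑ x ∈ F, x) hT
  refine ⟨F, hF, hTF, fun v hv hvT => ?_⟩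
  have hE := hA.evenBlocks F hF
  have hTe : T ⊆ F.erase v := Finset.subset_erase.2 ⟨hTF, hvT⟩
  obtain ⟨F', hF', hsub, hne⟩ : ∃ F' ∈ A, F.erase v ⊆ F' ∧ F' ≠ F := by
    by_contra! hunique
    exact hbdry ((mem_complexBoundary_lowerClosure hA.card_eq).2 ⟨F, hF, v, hv, hTe, hunique⟩)
  obtain ⟨w, hw, rfl⟩ :=
    exists_eq_insert_erase hv ((hA.card_eq F' hF').trans hE.card_eq.symm) hne hsub
  have hE' := hA.evenBlocks _ hF'
  have hsum : ∑ x ∈ insert w (F.erase v), x + v = ∑ x ∈ F, x + w := by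
    rw [Finset.sum_insert (by simp [hw]), add_assoc, Finset.sum_erase_add F _ hv, add_comm]
  have hvw : v < w := by
    have hle := hmin (j := insert w (F.erase v)) ⟨hF', hTe.trans (Finset.subset_insert _ _)⟩
    grind
  refine ⟨(hE.even_count_iff_lt hv hw hE').2 hvw, fun hIcc => hw (hIcc ?_)⟩
  have hwn := (Finset.mem_Icc.1 (hE'.subset_Icc (Finset.mem_insert_self w _))).2
  exact Finset.mem_Icc.2 ⟨hvw.le, hwn⟩

theorem exists_minimal_of_union_notMem (hA : ShiftedEvenFamily n d A) (hn : d + 1 < n)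
    (h1 : H ∪ {1} ∈ complexBoundary d (lowerClosure A))
    (h12 : H ∪ {1, 2} ∉ complexBoundary d (lowerClosure A)) :
    ∃ F ∈ A, ∀ v ∈ F, v ∉ H ∪ {2} → Even (Nat.count (· ∈ F) v) ∧ ¬ Finset.Icc v n ⊆ F := by
  obtain ⟨F₀, hF₀, v₀, -, hsub₀, -⟩ := (mem_complexBoundary_lowerClosure hA.card_eq).1 h1
  have hsub : H ∪ {1} ⊆ F₀ := hsub₀.trans (F₀.erase_subset v₀)
  have hpair : {1, 2} ⊆ F₀ := hA.pair_subset (by omega) hF₀ (hsub (by simp))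
  obtain ⟨F, hF, -, hmin⟩ := hA.exists_minimal ⟨F₀, hF₀, by grind⟩ h12
  have hE := hA.evenBlocks F hF
  refine ⟨F, hF, fun v hv hvH => ?_⟩
  rcases eq_or_ne v 1 with rfl | hv1
  · exact ⟨by simp [hE.count_one], hE.not_Icc_subset hn⟩
  · exact hmin v hv (by grind)

theorem union_mem_boundary (hA : ShiftedEvenFamily n d A) (hn : d + 1 < n)
    (h1 : H ∪ {1} ∈ complexBoundary d (lowerClosure A))
    (h2 : H ∪ {2} ∈ complexBoundary d (lowerClosure A)) :
    H ∪ {1, 2} ∈ complexBoundary d (lowerClosure A) := by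
  by_contra h12
  obtain ⟨F, hF, hmin⟩ := hA.exists_minimal_of_union_notMem hn h1 h12
  obtain ⟨F', hF', v, hv, hsub, hunique⟩ := (mem_complexBoundary_lowerClosure hA.card_eq).1 h2
  have hE := hA.evenBlocks F hF
  have hE' := hA.evenBlocks F' hF'
  have hvH : v ∉ H ∪ {2} := fun h => Finset.notMem_erase v F' (hsub h)
  have h1v : 1 ∉ F'.erase v := fun h1v => h12 <|
    (mem_complexBoundary_lowerClosure hA.card_eq).2 ⟨F', hF', v, hv, by grind, hunique⟩
  have hdiff : ∀ {G}, H ∪ {2} ⊆ G → ∀ x ∈ F, x ∉ G → Even (Nat.count (· ∈ F) x) :=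
    fun hG x hx hxG => (hmin x hx fun h => hxG (hG h)).1
  have hgap : Even (Nat.count (· ∈ F') v) → ¬ Finset.Icc v n ⊆ F' := by
    intro heven' hIcc'
    have hvn := hE'.subset_Icc hv
    have heven : Even (Nat.count (· ∈ F) v) := by
      by_cases hvF : v ∈ F
      · exact (hmin v hvF hvH).1
      · exact hE.even_count v hvn hvF
    have hIcc : Finset.Icc v n ⊆ F := hE.Icc_subset_of_Icc_subset hE'
      (hdiff (hsub.trans (F'.erase_subset v))) (by grind) heven heven' hIcc'
    exact (hmin v (hIcc (by grind)) hvH).2 hIcc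
  obtain ⟨w, hw, hEw⟩ := hE'.exists_exchange hv h1v hgap
  have hmem : insert w (F'.erase v) ∈ A := hA.up_closed F hF _ hEw fun x =>
    (hE.count_le_count hEw (hdiff (hsub.trans (Finset.subset_insert _ _))) x).1
  exact hw (hunique _ hmem (Finset.subset_insert _ _) ▸ Finset.mem_insert_self _ _)

theorem linkCondition (hA : ShiftedEvenFamily n d A) (hn : d + 1 < n) :
    LinkCondition (complexBoundary d (lowerClosure A)) 1 2 := by
  have hlower := isLowerSet_complexBoundary d (lowerClosure A)
  refine Set.Subset.antisymm ?_ ?_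
  · rintro H ⟨⟨hdisj, h1⟩, hdisj', h2⟩
    exact ⟨by simp_all, hA.union_mem_boundary hn h1 h2⟩
  · rintro H ⟨hdisj, h12⟩
    have hsub : ∀ W ⊆ ({1, 2} : Finset ℕ), H ∪ W ⊆ H ∪ {1, 2} :=
      fun W => Finset.union_subset_union_right
    exact ⟨⟨hdisj.mono_right (by simp), hlower (hsub _ (by simp)) h12⟩,
      hdisj.mono_right (by simp), hlower (hsub _ (by simp)) h12⟩

theorem erase_two_mem_boundary (hA : ShiftedEvenFamily n d A) (hn : 2 ≤ n) (hF : F ∈ A)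
    (h1 : 1 ∈ F) : F.erase 2 ∈ complexBoundary d (lowerClosure A) := by
  have h2 := (hA.evenBlocks F hF).two_mem hn h1
  refine (mem_complexBoundary_lowerClosure hA.card_eq).2
    ⟨F, hF, 2, h2, subset_rfl, fun F' hF' hsub => ?_⟩
  have h2' := (hA.evenBlocks F' hF').two_mem hn (hsub (by simp [h1]))
  refine (Finset.eq_of_subset_of_card_le ?_ ?_).symm
  · exact Finset.insert_erase h2 ▸ Finset.insert_subset h2' hsub
  · rw [hA.card_eq F hF, hA.card_eq F' hF']

theorem erase_one_mem_boundary_deletion (hA : ShiftedEvenFamily n d A) (hn : d + 1 < n)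
    (hF : F ∈ A) (h1 : 1 ∈ F) :
    F.erase 1 ∈ complexBoundary d (lowerClosure {F ∈ A | 1 ∉ F}) := by
  have hE := hA.evenBlocks F hF
  have heven : Even (Nat.count (· ∈ F) 1) := by simp [hE.count_one]
  obtain ⟨w, hw, hEw⟩ := hE.exists_exchange_of_even h1 heven (hE.not_Icc_subset hn)
  have h1w : 1 < w := (hE.even_count_iff_lt h1 hw hEw).1 heven
  refine (mem_complexBoundary_lowerClosure fun F hF => hA.card_eq F hF.1).2
    ⟨insert w (F.erase 1), ⟨hA.exchange_mem hF h1 hw h1w hEw, by grind⟩, w, by simp, ?_, ?_⟩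
  · rw [Finset.erase_insert (by simp [hw])]
  · rintro F' ⟨hF', h1F'⟩ hsub
    rw [Finset.erase_insert (by simp [hw])] at hsub
    obtain ⟨w', hw', rfl⟩ := exists_eq_insert_erase h1
      ((hA.card_eq F' hF').trans hE.card_eq.symm) (ne_of_mem_of_not_mem' h1 h1F').symm hsub
    rw [hE.exchange_unique h1 heven hw' hw (hA.evenBlocks _ hF') hEw]

theorem contraction_eq (hA : ShiftedEvenFamily n d A) (hn : d + 1 < n) :
    contraction (complexBoundary d (lowerClosure A)) 1 2 =
      complexBoundary d (lowerClosure {F ∈ A | 1 ∉ F}) := by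
  have hlower := isLowerSet_complexBoundary d (lowerClosure {F ∈ A | 1 ∉ F})
  have hcard : ∀ F ∈ {F ∈ A | 1 ∉ F}, F.card = d + 1 := fun F hF => hA.card_eq F hF.1
  refine Set.Subset.antisymm ?_ fun X hX => ?_
  · rintro _ (⟨hX, h1X⟩ | ⟨Y, hY, h1Y, rfl⟩)
    · obtain ⟨F, hF, v, hv, hXF, hunique⟩ := (mem_complexBoundary_lowerClosure hA.card_eq).1 hX
      by_cases h1F : 1 ∈ F
      · exact hlower (show _ ⊆ F.erase 1 by grind) (hA.erase_one_mem_boundary_deletion hn hF h1F)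
      · exact (mem_complexBoundary_lowerClosure hcard).2
          ⟨F, ⟨hF, h1F⟩, v, hv, hXF, fun F' hF' => hunique F' hF'.1⟩
    · obtain ⟨F, hF, v, -, hYF, -⟩ := (mem_complexBoundary_lowerClosure hA.card_eq).1 hY
      have h1F : 1 ∈ F := Finset.mem_of_mem_erase (hYF h1Y)
      have h12 := hA.pair_subset (by omega) hF h1F
      exact hlower (show _ ⊆ F.erase 1 by grind) (hA.erase_one_mem_boundary_deletion hn hF h1F)
  · obtain ⟨F, ⟨hF, h1F⟩, v, hv, hXF, hunique⟩ := (mem_complexBoundary_lowerClosure hcard).1 hX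
    by_cases hone : ∃ F' ∈ A, 1 ∈ F' ∧ F.erase v ⊆ F'
    · obtain ⟨F', hF', h1F', hsub⟩ := hone
      exact mem_contraction_of_subset_erase (isLowerSet_complexBoundary _ _) h1F'
        (hA.erase_two_mem_boundary (by omega) hF' h1F') (by grind)
    · refine Or.inl ⟨(mem_complexBoundary_lowerClosure hA.card_eq).2
        ⟨F, hF, v, hv, hXF, fun F' hF' hsub => ?_⟩, by grind⟩
      exact hunique F' ⟨hF', fun h1F' => hone ⟨F', hF', h1F', hsub⟩⟩ hsub

theorem linkOf_eq (hA : ShiftedEvenFamily n d A) (hd : 1 < d) (hn : 2 ≤ n) :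
    linkOf (complexBoundary d (lowerClosure A)) {1, 2} =
      complexBoundary (d - 2) (lowerClosure ((· \ {1, 2}) '' {F ∈ A | 1 ∈ F})) := by
  have hmem : {F ∈ A | {1, 2} ⊆ F} = {F ∈ A | 1 ∈ F} := by
    ext F
    exact and_congr_right fun hF => ⟨fun h => h (by simp), hA.pair_subset hn hF⟩
  rw [linkOf_complexBoundary_lowerClosure hA.card_eq (by simpa using Nat.succ_le_of_lt hd), hmem]
  simp

end ShiftedEvenFamily

/-! ### Block sequences -/

/-- The sequences which encode the sets with even blocks, see `blockSet`. The `j`-th pair of the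
set is `{s j + 2 * j, s j + 2 * j + 1}`, so for the facet `F_d(x_{i_1}⋯x_{i_k})` the sequence is
`i_1, …, i_k, n - d, n - d, …`. -/
structure IsBlockSeq (n d : ℕ) (s : ℕ → ℕ) : Prop where
  monotone : Monotone s
  one_le : ∀ j, 1 ≤ s j
  eq_of_le : ∀ j, d ≤ 2 * j → s j = n - d

/-- The set with even blocks encoded by a sequence; its `i`-th element, counting from `0`, is
`s (i / 2) + i`. -/
def blockSet (d : ℕ) (s : ℕ → ℕ) : Finset ℕ :=
  (Finset.range (d + 1)).image fun i => s (i / 2) + i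

theorem count_mem_image_range {e : ℕ → ℕ} (he : StrictMono e) {i k : ℕ} (hi : i ≤ k) :
    Nat.count (· ∈ (Finset.range k).image e) (e i) = i := by
  have hfilter : (Finset.range (e i)).filter (· ∈ (Finset.range k).image e) =
      (Finset.range i).image e := by
    ext x
    simp only [Finset.mem_filter, Finset.mem_range, Finset.mem_image]
    constructor
    · rintro ⟨hx, j, -, rfl⟩
      exact ⟨j, he.lt_iff_lt.1 hx, rfl⟩
    · rintro ⟨j, hj, rfl⟩
      exact ⟨he hj, j, hj.trans_le hi, rfl⟩
  rw [Nat.count_eq_card_filter_range, hfilter, Finset.card_image_of_injective _ he.injective,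
    Finset.card_range]

namespace IsBlockSeq

variable {n d i j x : ℕ} {s t : ℕ → ℕ}

theorem le (hs : IsBlockSeq n d s) (j : ℕ) : s j ≤ n - d :=
  (hs.monotone (Nat.le_add_right j d)).trans_eq (hs.eq_of_le _ (by omega))

theorem strictMono (hs : IsBlockSeq n d s) : StrictMono fun i => s (i / 2) + i :=
  Monotone.add_strictMono (fun _ _ h => hs.monotone (Nat.div_le_div_right h)) strictMono_id

theorem card_blockSet (hs : IsBlockSeq n d s) : (blockSet d s).card = d + 1 := by
  rw [blockSet, Finset.card_image_of_injective _ hs.strictMono.injective, Finset.card_range]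

theorem count_blockSet (hs : IsBlockSeq n d s) (hi : i ≤ d + 1) :
    Nat.count (· ∈ blockSet d s) (s (i / 2) + i) = i :=
  count_mem_image_range hs.strictMono hi

theorem mem_blockSet (hs : IsBlockSeq n d s) (hdn : d ≤ n) :
    x ∈ blockSet d s ↔ x ≤ n ∧ ∃ i, s (i / 2) + i = x := by
  simp only [blockSet, Finset.mem_image, Finset.mem_range]
  constructor
  · rintro ⟨i, hi, rfl⟩
    have := hs.le (i / 2)
    exact ⟨by omega, i, rfl⟩
  · rintro ⟨hx, i, rfl⟩
    refine ⟨i, ?_, rfl⟩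
    by_contra! hi
    have := hs.eq_of_le (i / 2) (by omega)
    omega

theorem nth_blockSet (hs : IsBlockSeq n d s) (hi : i ≤ d) :
    Nat.nth (· ∈ blockSet d s) i = s (i / 2) + i := by
  have hmem : s (i / 2) + i ∈ blockSet d s :=
    Finset.mem_image_of_mem _ (Finset.mem_range.2 (Nat.lt_succ_of_le hi))
  have hnth := Nat.nth_count (p := (· ∈ blockSet d s)) hmem
  rwa [hs.count_blockSet (hi.trans d.le_succ)] at hnth

theorem evenBlocks_blockSet (hs : IsBlockSeq n d s) (hdn : d ≤ n) :
    EvenBlocks n d (blockSet d s) where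
  subset_Icc x hx := by
    obtain ⟨hxn, i, rfl⟩ := (hs.mem_blockSet hdn).1 hx
    exact Finset.mem_Icc.2 ⟨(hs.one_le _).trans (Nat.le_add_right _ _), hxn⟩
  card_eq := hs.card_blockSet
  even_count x hx hxs := by
    have hxn := (Finset.mem_Icc.1 hx).2
    by_contra hodd
    obtain ⟨j, hj⟩ := Nat.not_even_iff_odd.1 hodd
    have hjd : 2 * j + 1 ≤ d + 1 := by
      have htop := hs.eq_of_le ((d + 1) / 2) (by omega)
      rw [← hj, ← hs.count_blockSet le_rfl]
      exact Nat.count_monotone _ (by omega)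
    have hlt : s (2 * j / 2) + 2 * j < x := by
      by_contra! hle
      have hcount := Nat.count_monotone (· ∈ blockSet d s) hle
      rw [hs.count_blockSet (by omega)] at hcount
      omega
    refine hxs ((hs.mem_blockSet hdn).2 ⟨hxn, 2 * j + 1, ?_⟩)
    by_contra! hne
    have hhalf : (2 * j + 1) / 2 = 2 * j / 2 := by omega
    have hlt' : s ((2 * j + 1) / 2) + (2 * j + 1) < x := by
      rw [hhalf] at hne ⊢
      omega
    have hcount := Nat.count_strict_mono (p := (· ∈ blockSet d s))
      ((hs.mem_blockSet hdn).2 ⟨by omega, 2 * j + 1, rfl⟩) hlt'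
    rw [hs.count_blockSet hjd, hj] at hcount
    exact hcount.false

theorem le_of_count_le (hs : IsBlockSeq n d s) (ht : IsBlockSeq n d t)
    (h : ∀ x, Nat.count (· ∈ blockSet d t) x ≤ Nat.count (· ∈ blockSet d s) x) (j : ℕ) :
    s j ≤ t j := by
  rcases le_or_gt d (2 * j) with hj | hj
  · rw [hs.eq_of_le j hj, ht.eq_of_le j hj]
  · have hnth := nth_mem_le_nth_mem (i := 2 * j) (by rw [hs.card_blockSet]; omega)
      (by rw [ht.card_blockSet]; omega) h
    simpa [hs.nth_blockSet hj.le, ht.nth_blockSet hj.le] using hnth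

end IsBlockSeq

/-- The sequence which encodes a given set `F` with even blocks. -/
noncomputable def blockSeq (n d : ℕ) (F : Finset ℕ) (j : ℕ) : ℕ :=
  if 2 * j ≤ d then Nat.nth (· ∈ F) (2 * j) - 2 * j else n - d

namespace EvenBlocks

variable {n d : ℕ} {F : Finset ℕ} {i j : ℕ}

theorem nth_mem (hF : EvenBlocks n d F) (hi : i ≤ d) : Nat.nth (· ∈ F) i ∈ F :=
  nth_mem_finset (by rw [hF.card_eq]; omega)

theorem lt_nth (hF : EvenBlocks n d F) (hi : i ≤ d) : i < Nat.nth (· ∈ F) i := by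
  have h0 := (Finset.mem_Icc.1 (hF.subset_Icc (hF.nth_mem (Nat.zero_le d)))).1
  have h := nth_mem_add_le_nth_add (F := F) (i := 0) (k := i) (by rw [hF.card_eq]; omega)
  rw [zero_add] at h
  omega

theorem nth_two_mul_add_one (hF : EvenBlocks n d F) (hj : 2 * j < d) :
    Nat.nth (· ∈ F) (2 * j + 1) = Nat.nth (· ∈ F) (2 * j) + 1 := by
  have hcount : Nat.count (· ∈ F) (Nat.nth (· ∈ F) (2 * j) + 1) = 2 * j + 1 := by
    rw [Nat.count_succ, if_pos (hF.nth_mem hj.le), count_mem_nth (by rw [hF.card_eq]; omega)]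
  have hlt : Nat.nth (· ∈ F) (2 * j) + 1 ≤ Nat.nth (· ∈ F) (2 * j + 1) :=
    nth_mem_add_le_nth_add (by rw [hF.card_eq]; omega)
  have hn := (Finset.mem_Icc.1 (hF.subset_Icc (hF.nth_mem (i := 2 * j + 1) hj))).2
  have hmem : Nat.nth (· ∈ F) (2 * j) + 1 ∈ F := by
    by_contra hmem
    have heven := hF.even_count _ (Finset.mem_Icc.2 ⟨by omega, hlt.trans hn⟩) hmem
    rw [hcount] at heven
    exact Nat.not_even_two_mul_add_one j heven
  rw [← hcount]
  exact Nat.nth_count hmem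

theorem nth_of_even (hF : EvenBlocks n d F) (hd : Even d) : Nat.nth (· ∈ F) d = n := by
  have hn := Finset.mem_Icc.1 (hF.subset_Icc (hF.nth_mem le_rfl))
  have htop := hF.count_eq_card n.lt_succ_self
  rw [Nat.count_succ] at htop
  split_ifs at htop with hmem
  · rw [← Nat.succ.inj htop]
    exact Nat.nth_count hmem
  · have heven := hF.even_count n (Finset.mem_Icc.2 ⟨hn.1.trans hn.2, le_rfl⟩) hmem
    rw [add_zero] at htop
    rw [htop] at heven
    exact absurd hd (Nat.even_add_one.1 heven)

theorem isBlockSeq_blockSeq (hF : EvenBlocks n d F) : IsBlockSeq n d (blockSeq n d F) := by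
  have hlow : ∀ i ≤ d, i < Nat.nth (· ∈ F) i := fun i => hF.lt_nth
  have hnth : ∀ i k, i + k ≤ d → Nat.nth (· ∈ F) i + k ≤ Nat.nth (· ∈ F) (i + k) :=
    fun i k h => nth_mem_add_le_nth_add (by rw [hF.card_eq]; omega)
  have hup : Nat.nth (· ∈ F) d ≤ n := (Finset.mem_Icc.1 (hF.subset_Icc (hF.nth_mem le_rfl))).2
  have hdn := hlow d le_rfl
  refine ⟨monotone_nat_of_le_succ fun j => ?_, fun j => ?_, fun j hj => ?_⟩
  · simp only [blockSeq]
    split_ifs with h h'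
    · have := hnth (2 * j) 2 h'
      rw [mul_add_one]
      omega
    · have := hnth (2 * j) (d - 2 * j) (by omega)
      rw [Nat.add_sub_cancel' h] at this
      omega
    · omega
    · rfl
  · rw [blockSeq]
    split_ifs with h
    · exact Nat.le_sub_of_add_le' (hlow _ h)
    · omega
  · rw [blockSeq]
    split_ifs with h
    · obtain rfl : 2 * j = d := le_antisymm h hj
      rw [hF.nth_of_even (even_two_mul j)]
    · rfl

theorem blockSeq_add (hF : EvenBlocks n d F) (hi : i ≤ d) :
    blockSeq n d F (i / 2) + i = Nat.nth (· ∈ F) i := by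
  have hseq_even : ∀ j, 2 * j ≤ d → blockSeq n d F j + 2 * j = Nat.nth (· ∈ F) (2 * j) :=
    fun j hj => by rw [blockSeq, if_pos hj, Nat.sub_add_cancel (hF.lt_nth hj).le]
  obtain ⟨j, rfl | rfl⟩ := Nat.even_or_odd' i
  · rw [Nat.mul_div_cancel_left j two_pos, hseq_even j hi]
  · have hj : (2 * j + 1) / 2 = j := by omega
    rw [hj, ← add_assoc, hseq_even j (by omega), hF.nth_two_mul_add_one hi]

theorem blockSet_blockSeq (hF : EvenBlocks n d F) : blockSet d (blockSeq n d F) = F := by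
  refine Finset.eq_of_subset_of_card_le (Finset.image_subset_iff.2 fun i hi => ?_) ?_
  · have hid : i ≤ d := Nat.lt_succ_iff.1 (Finset.mem_range.1 hi)
    exact hF.blockSeq_add hid ▸ hF.nth_mem hid
  · rw [hF.card_eq, hF.isBlockSeq_blockSeq.card_blockSet]

end EvenBlocks

/-! ### Facets of squeezed balls -/

/-- The indices of the variables of the monomial `u` in increasing order, continued by the
constant `c`. -/
noncomputable def paddedSort (c : ℕ) (u : Multiset ℕ) (j : ℕ) : ℕ :=
  (u.sort (· ≤ ·)).getD j c

theorem paddedSort_of_card_le {c j : ℕ} {u : Multiset ℕ} (hj : Multiset.card u ≤ j) :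
    paddedSort c u j = c :=
  List.getD_eq_default _ _ (by simpa using hj)

theorem paddedSort_mem {c j : ℕ} {u : Multiset ℕ} (hj : j < Multiset.card u) :
    paddedSort c u j ∈ u := by
  rw [paddedSort, List.getD_eq_getElem _ _ (by simpa using hj), ← Multiset.mem_sort (· ≤ ·)]
  exact List.getElem_mem _

theorem monotone_paddedSort {c : ℕ} {u : Multiset ℕ} (hu : ∀ i ∈ u, i ≤ c) :
    Monotone (paddedSort c u) := by
  intro j k hjk
  rcases lt_or_ge k (Multiset.card u) with hk | hk
  · have hj := hjk.trans_lt hk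
    rw [paddedSort, paddedSort, List.getD_eq_getElem _ _ (by simpa using hj),
      List.getD_eq_getElem _ _ (by simpa using hk)]
    exact (Multiset.pairwise_sort u (· ≤ ·)).sortedLE.getElem_le_getElem_of_le hjk
  · rw [paddedSort_of_card_le hk]
    rcases lt_or_ge j (Multiset.card u) with hj | hj
    · exact hu _ (paddedSort_mem hj)
    · exact (paddedSort_of_card_le hj).le

theorem paddedSort_coe {c : ℕ} {l : List ℕ} (hl : l.Pairwise (· ≤ ·)) (j : ℕ) :
    paddedSort c l j = l.getD j c := by
  rw [paddedSort, Multiset.coe_sort, List.mergeSort_of_pairwise (by simpa using hl)]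

theorem exists_paddedSort_eq {c N : ℕ} {s : ℕ → ℕ} (hs : Monotone s) (hN : s N = c)
    (hc : ∀ j, s j ≤ c) : ∃ u : Multiset ℕ, (∀ i ∈ u, i < c) ∧ paddedSort c u = s := by
  have hex : ∃ k, s k = c := ⟨N, hN⟩
  let l := (List.range (Nat.find hex)).map s
  have hl : l.Pairwise (· ≤ ·) := List.pairwise_lt_range.map s fun _ _ h => hs h.le
  refine ⟨l, fun i hi => ?_, funext fun j => ?_⟩
  · obtain ⟨j, hj, rfl⟩ := List.mem_map.1 (Multiset.mem_coe.1 hi)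
    exact (hc j).lt_of_ne (Nat.find_min hex (List.mem_range.1 hj))
  · rw [paddedSort_coe hl]
    rcases lt_or_ge j (Nat.find hex) with hj | hj
    · simp [l, List.getD_eq_getElem?_getD, hj]
    · rw [List.getD_eq_default _ _ (by simpa [l] using hj)]
      exact le_antisymm ((Nat.find_spec hex).ge.trans (hs hj)) (hc j)

theorem paddedSort_zero_eq_iff {a c : ℕ} {u : Multiset ℕ} (hu : ∀ i ∈ u, a ≤ i) (hc : a < c) :
    paddedSort c u 0 = a ↔ a ∈ u := by
  constructor
  · rintro rfl
    refine paddedSort_mem (Nat.pos_of_ne_zero fun h => hc.ne ?_)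
    exact paddedSort_of_card_le h.le
  · intro ha
    rw [← Multiset.mem_sort (· ≤ ·)] at ha
    rw [paddedSort]
    rcases h : u.sort (· ≤ ·) with - | ⟨b, l⟩
    · simp [h] at ha
    · have hsorted := Multiset.pairwise_sort u (· ≤ ·)
      have hb : b ∈ u := (Multiset.mem_sort (· ≤ ·)).1 (by simp [h])
      rw [h] at ha hsorted
      refine le_antisymm ?_ (hu b hb)
      rcases List.mem_cons.1 ha with rfl | hal
      · rfl
      · exact List.rel_of_pairwise_cons hsorted hal

theorem isBlockSeq_paddedSort {n d : ℕ} {u : Multiset ℕ} (hn : d < n)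
    (hu : ∀ i ∈ u, i ∈ Finset.Icc 1 (n - d - 1)) (hdeg : 2 * Multiset.card u ≤ d + 1) :
    IsBlockSeq n d (paddedSort (n - d) u) where
  monotone := monotone_paddedSort fun i hi => by grind
  one_le j := by
    rcases lt_or_ge j (Multiset.card u) with hj | hj
    · exact (Finset.mem_Icc.1 (hu _ (paddedSort_mem hj))).1
    · rw [paddedSort_of_card_le hj]
      omega
  eq_of_le j hj := paddedSort_of_card_le (by omega)

theorem Fd_eq_blockSet {n d : ℕ} {u : Multiset ℕ} (hdn : d ≤ n)
    (hdeg : 2 * Multiset.card u ≤ d + 1) : Fd n d u = blockSet d (paddedSort (n - d) u) := by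
  have hgetD : ∀ j < Multiset.card u, (u.sort (· ≤ ·)).getD j 0 = paddedSort (n - d) u j := by
    intro j hj
    rw [paddedSort, List.getD_eq_getElem _ _ (by simpa using hj),
      List.getD_eq_getElem _ _ (by simpa using hj)]
  ext x
  simp only [Fd, blockSet, Finset.mem_union, Finset.mem_biUnion, Finset.mem_image, Finset.mem_range,
    Finset.mem_insert, Finset.mem_singleton, Finset.mem_Icc]
  constructor
  · rintro (⟨j, hj, h⟩ | h)
    · rw [hgetD j hj] at h
      rcases h with rfl | rfl
      · exact ⟨2 * j, by omega, by rw [Nat.mul_div_cancel_left j two_pos]⟩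
      · exact ⟨2 * j + 1, by omega, by rw [Nat.mul_add_div two_pos]; rfl⟩
    · refine ⟨x - (n - d), by omega, ?_⟩
      rw [paddedSort_of_card_le (by omega)]
      omega
  · rintro ⟨i, hi, rfl⟩
    rcases lt_or_ge (i / 2) (Multiset.card u) with hj | hj
    · refine Or.inl ⟨i / 2, hj, ?_⟩
      rw [hgetD _ hj]
      omega
    · rw [paddedSort_of_card_le hj]
      omega

theorem one_mem_Fd_iff {n d : ℕ} {u : Multiset ℕ} (hn : d + 1 < n)
    (hu : ∀ i ∈ u, i ∈ Finset.Icc 1 (n - d - 1)) (hdeg : 2 * Multiset.card u ≤ d + 1) :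
    1 ∈ Fd n d u ↔ 1 ∈ u := by
  have hs := isBlockSeq_paddedSort (by omega) hu hdeg
  rw [Fd_eq_blockSet (by omega) hdeg, hs.mem_blockSet (by omega),
    ← paddedSort_zero_eq_iff (fun i hi => (Finset.mem_Icc.1 (hu i hi)).1) (by omega : 1 < n - d)]
  constructor
  · rintro ⟨-, i, hi⟩
    have := hs.one_le (i / 2)
    obtain rfl : i = 0 := by omega
    exact hi
  · exact fun h => ⟨by omega, 0, h⟩

theorem IsShiftedOrderIdeal.mem_of_getD_le {m c : ℕ} {U : Set (Multiset ℕ)}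
    (hU : IsShiftedOrderIdeal m U) {l l' : List ℕ} {s : Multiset ℕ} (hl : (l : Multiset ℕ) + s ∈ U)
    (hl' : ∀ i ∈ l', i ≤ m ∧ i < c) (h : ∀ j, l.getD j c ≤ l'.getD j c) :
    (l' : Multiset ℕ) + s ∈ U := by
  obtain ⟨-, -, -, hdvd, hshift⟩ := hU
  induction l' generalizing l s with
  | nil => exact hdvd _ hl _ (by simp)
  | cons b l' ih =>
    obtain ⟨hbm, hbc⟩ := hl' b (by simp)
    cases l with
    | nil => exact absurd (h 0) (by simpa using hbc)
    | cons a l =>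
      have hb : b ::ₘ ((l : Multiset ℕ) + s) ∈ U := by
        rw [← Multiset.cons_coe, Multiset.cons_add] at hl
        rcases (show a ≤ b from h 0).eq_or_lt with rfl | hab
        · exact hl
        · exact hshift _ a b hab hbm hl
      rw [← Multiset.cons_coe, Multiset.cons_add, ← Multiset.add_cons]
      exact ih (by rwa [Multiset.add_cons]) (fun i hi => hl' i (by simp [hi])) fun j => h (j + 1)

theorem IsShiftedOrderIdeal.mem_of_paddedSort_le {m : ℕ} {U : Set (Multiset ℕ)}
    (hU : IsShiftedOrderIdeal m U) {u u' : Multiset ℕ} (hu : u ∈ U)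
    (hu' : ∀ i ∈ u', i < m + 1) (h : ∀ j, paddedSort (m + 1) u j ≤ paddedSort (m + 1) u' j) :
    u' ∈ U := by
  have hmem := hU.mem_of_getD_le (s := 0) (by simpa using hu) (fun i hi => ?_) h
  · simpa using hmem
  · have := hu' i (by simpa using hi)
    omega

/-! ### Squeezed spheres -/

section SqueezedSphere

variable {n d : ℕ} {U : Set (Multiset ℕ)}

theorem shiftedEvenFamily_image_Fd (hn : d + 1 < n) (hU : IsShiftedOrderIdeal (n - d - 1) U)
    (hdeg : ∀ u ∈ U, 2 * Multiset.card u ≤ d + 1) : ShiftedEvenFamily n d (Fd n d '' U) where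
  evenBlocks := by
    rintro _ ⟨u, hu, rfl⟩
    rw [Fd_eq_blockSet (by omega) (hdeg u hu)]
    exact (isBlockSeq_paddedSort (by omega) (hU.1 u hu) (hdeg u hu)).evenBlocks_blockSet (by omega)
  up_closed := by
    rintro _ ⟨u, hu, rfl⟩ F hF hle
    have hs := isBlockSeq_paddedSort (by omega) (hU.1 u hu) (hdeg u hu)
    have ht := hF.isBlockSeq_blockSeq
    obtain ⟨u', hu', hseq⟩ := exists_paddedSort_eq ht.monotone (ht.eq_of_le d (by omega)) ht.le
    have hFu' : F = blockSet d (paddedSort (n - d) u') := by rw [hseq, hF.blockSet_blockSeq]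
    rw [Fd_eq_blockSet (by omega) (hdeg u hu), hFu'] at hle
    have hm : n - d = n - d - 1 + 1 := by omega
    have hmem : u' ∈ U := hU.mem_of_paddedSort_le hu (hm ▸ hu')
      (hm ▸ hs.le_of_count_le (hseq ▸ ht) hle)
    exact ⟨u', hmem, (Fd_eq_blockSet (by omega) (hdeg u' hmem)).trans hFu'.symm⟩

theorem setOf_exists_subset_eq_lowerClosure {α : Type*} (f : α → Finset ℕ) (V : Set α) :
    {G | ∃ u ∈ V, G ⊆ f u} = lowerClosure (f '' V) := by
  ext G
  simp

theorem squeezedSphere_eq (n d : ℕ) (U : Set (Multiset ℕ)) :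
    squeezedSphere n d U = complexBoundary d (lowerClosure (Fd n d '' U)) :=
  congrArg _ (setOf_exists_subset_eq_lowerClosure _ _)

theorem image_Fd_deletion (hn : d + 1 < n) (hU : IsShiftedOrderIdeal (n - d - 1) U)
    (hdeg : ∀ u ∈ U, 2 * Multiset.card u ≤ d + 1) :
    Fd n d '' {u ∈ U | 1 ∉ u} = {F ∈ Fd n d '' U | 1 ∉ F} := by
  ext F
  constructor
  · rintro ⟨u, ⟨hu, h1⟩, rfl⟩
    exact ⟨⟨u, hu, rfl⟩, (one_mem_Fd_iff hn (hU.1 u hu) (hdeg u hu)).not.2 h1⟩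
  · rintro ⟨⟨u, hu, rfl⟩, h1⟩
    exact ⟨u, ⟨hu, (one_mem_Fd_iff hn (hU.1 u hu) (hdeg u hu)).not.1 h1⟩, rfl⟩

theorem image_Fd_cons_sdiff (hn : d + 1 < n) (hU : IsShiftedOrderIdeal (n - d - 1) U)
    (hdeg : ∀ u ∈ U, 2 * Multiset.card u ≤ d + 1) :
    (fun u => Fd n d (1 ::ₘ u) \ {1, 2}) '' {u | 1 ::ₘ u ∈ U} =
      (· \ {1, 2}) '' {F ∈ Fd n d '' U | 1 ∈ F} := by
  ext G
  constructor
  · rintro ⟨u, hu, rfl⟩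
    exact ⟨_, ⟨⟨_, hu, rfl⟩, (one_mem_Fd_iff hn (hU.1 _ hu) (hdeg _ hu)).2 (by simp)⟩, rfl⟩
  · rintro ⟨_, ⟨⟨u, hu, rfl⟩, h1⟩, rfl⟩
    obtain ⟨v, rfl⟩ :=
      Multiset.exists_cons_of_mem ((one_mem_Fd_iff hn (hU.1 u hu) (hdeg u hu)).1 h1)
    exact ⟨v, hu, rfl⟩

theorem linkCondition_squeezedSphere (hn : d + 1 < n) (hU : IsShiftedOrderIdeal (n - d - 1) U)
    (hdeg : ∀ u ∈ U, 2 * Multiset.card u ≤ d + 1) : LinkCondition (squeezedSphere n d U) 1 2 := by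
  rw [squeezedSphere_eq]
  exact (shiftedEvenFamily_image_Fd hn hU hdeg).linkCondition hn

theorem contraction_squeezedSphere (hn : d + 1 < n) (hU : IsShiftedOrderIdeal (n - d - 1) U)
    (hdeg : ∀ u ∈ U, 2 * Multiset.card u ≤ d + 1) :
    contraction (squeezedSphere n d U) 1 2 = squeezedSphere n d {u ∈ U | 1 ∉ u} := by
  rw [squeezedSphere_eq, squeezedSphere_eq, image_Fd_deletion hn hU hdeg]
  exact (shiftedEvenFamily_image_Fd hn hU hdeg).contraction_eq hn

theorem linkOf_squeezedSphere (hd : 1 < d) (hn : d + 1 < n)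
    (hU : IsShiftedOrderIdeal (n - d - 1) U) (hdeg : ∀ u ∈ U, 2 * Multiset.card u ≤ d + 1) :
    linkOf (squeezedSphere n d U) {1, 2} = complexBoundary (d - 2)
      {G | ∃ u ∈ {u : Multiset ℕ | 1 ::ₘ u ∈ U}, G ⊆ Fd n d (1 ::ₘ u) \ {1, 2}} := by
  rw [squeezedSphere_eq, setOf_exists_subset_eq_lowerClosure, image_Fd_cons_sdiff hn hU hdeg]
  exact (shiftedEvenFamily_image_Fd hn hU hdeg).linkOf_eq hd (by omega)

end SqueezedSphere

/-- Lemma 5.2 / `5no2`. With `Û = U ∩ K[x_2,…,x_m]` and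
`Ũ = {u : x_1 u ∈ U}`, one has
`Shift_{12}(S_d(U)) = S_d(Û) ∪ { {1} ∪ F : F ∈ {2} * S̃_{d-2}(Ũ) }`; in particular
`S_d(U)` satisfies the Link condition w.r.t. `{1,2}`, `C_{S_d(U)}({1,2}) = S_d(Û)` and
`lk_{S_d(U)}({1,2}) = S̃_{d-2}(Ũ)`. -/
theorem stmt15 (n d : ℕ) (hd : 2 < d) (hn : d + 1 < n) (U : Set (Multiset ℕ))
    (hU : IsShiftedOrderIdeal (n - d - 1) U)
    (hdeg : ∀ u ∈ U, 2 * Multiset.card u ≤ d + 1) :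
    shiftComplex (squeezedSphere n d U) 1 2 =
        squeezedSphere n d {u ∈ U | (1 : ℕ) ∉ u} ∪
          {H | ∃ F ∈ joinW {2}
              (complexBoundary (d - 2)
                {G | ∃ u ∈ {u : Multiset ℕ | (1 ::ₘ u) ∈ U}, G ⊆ Fd n d (1 ::ₘ u) \ {1, 2}}),
            H = insert 1 F} ∧
    LinkCondition (squeezedSphere n d U) 1 2 ∧
    contraction (squeezedSphere n d U) 1 2 = squeezedSphere n d {u ∈ U | (1 : ℕ) ∉ u} ∧
    linkOf (squeezedSphere n d U) {1, 2} =
      complexBoundary (d - 2)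
        {G | ∃ u ∈ {u : Multiset ℕ | (1 ::ₘ u) ∈ U}, G ⊆ Fd n d (1 ::ₘ u) \ {1, 2}} := by
  have hlink := linkCondition_squeezedSphere hn hU hdeg
  have hcontraction := contraction_squeezedSphere hn hU hdeg
  have hlinkOf := linkOf_squeezedSphere (one_lt_two.trans hd) hn hU hdeg
  refine ⟨?_, hlink, hcontraction, hlinkOf⟩
  rw [← hcontraction, ← hlinkOf]
  exact shiftComplex_eq_of_linkCondition (isLowerSet_complexBoundary _ _) (by decide) hlink
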